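/- arXiv:2602.05048 — 3 statements merged into one kernel-verified Lean document; each statement's English description precedes it below -/
import Mathlib

section
/- (One-sided one-step Bellman bound.) Let M = (T,R) and M̄ = (T',R') be two finite discounted MDPs on (S, A, γ), and let Q_M, Q_{M̄} : S × A → ℝ be two functions such that (i) |max_{a'∈A} Q_{M̄}(s',a')| ≤ V*_{M̄}(s') for all s' ∈ S, and (ii) |Q_M(s,a) − Q_{M̄}(s,a)| ≤ d_{s,a}(M‖M̄) for all (s,a) ∈ S × A. Then |(Γ_M Q_M)(s,a) − (Γ_{M̄} Q_{M̄})(s,a)| ≤ d_{s,a}(M‖M̄) for all (s,a) ∈ S × A. -/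
open Finset

variable {S A : Type*}

/-- Max over the (finite, nonempty) action space. -/
noncomputable def qmax [Fintype A] [Nonempty A] (f : A → ℝ) : ℝ :=
  Finset.univ.sup' Finset.univ_nonempty f

/-- Bellman operator `Γ_M` of the MDP `M = (T, R)` with discount `γ`. -/
noncomputable def bellman [Fintype S] [Fintype A] [Nonempty A]
    (γ : ℝ) (T : S → A → S → ℝ) (R : S → A → ℝ)
    (f : S → A → ℝ) : S → A → ℝ :=
  fun s a => R s a + γ * ∑ s' : S, T s a s' * qmax (f s')

/-- `D_{s,a}(M‖M̄)`, where `Vbar` is the optimal value function of `M̄`. -/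
noncomputable def Dop [Fintype S]
    (γ : ℝ) (T : S → A → S → ℝ) (R : S → A → ℝ)
    (T' : S → A → S → ℝ) (R' : S → A → ℝ) (Vbar : S → ℝ) : S → A → ℝ :=
  fun s a => |R s a - R' s a| + γ * ∑ s' : S, Vbar s' * |T s a s' - T' s a s'|

/-- The operator `L_{M‖M̄}`, where `Vbar` is the optimal value function of `M̄`. -/
noncomputable def Lop [Fintype S] [Fintype A] [Nonempty A]
    (γ : ℝ) (T : S → A → S → ℝ) (R : S → A → ℝ)
    (T' : S → A → S → ℝ) (R' : S → A → ℝ) (Vbar : S → ℝ)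
    (f : S → A → ℝ) : S → A → ℝ :=
  fun s a => Dop γ T R T' R' Vbar s a + γ * ∑ s' : S, T s a s' * qmax (f s')

theorem qmax_sub_abs_le [Fintype A] [Nonempty A] (f g e : A → ℝ)
    (h : ∀ a, |f a - g a| ≤ e a) : |qmax f - qmax g| ≤ qmax e := by
  have key : ∀ f g : A → ℝ, (∀ a, |f a - g a| ≤ e a) → qmax f ≤ qmax g + qmax e := by
    intro f g h
    refine Finset.sup'_le _ _ fun a _ => ?_
    have h1 : g a ≤ qmax g := Finset.le_sup' g (Finset.mem_univ a)
    have h2 : e a ≤ qmax e := Finset.le_sup' e (Finset.mem_univ a)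
    have h3 := (abs_le.1 (h a)).2
    linarith
  have h1 := key f g h
  have h2 := key g f (fun a => by rw [abs_sub_comm]; exact h a)
  exact abs_le.2 ⟨by linarith, by linarith⟩

/-- One-sided one-step Bellman bound. -/
theorem one_sided_one_step_bellman_bound
    [Fintype S] [Nonempty S] [Fintype A] [Nonempty A]
    (γ : ℝ) (hγ0 : 0 ≤ γ) (hγ1 : γ < 1)
    (T : S → A → S → ℝ) (R : S → A → ℝ)
    (T' : S → A → S → ℝ) (R' : S → A → ℝ)
    (hT : ∀ s a s', 0 ≤ T s a s') (hTsum : ∀ s a, ∑ s' : S, T s a s' = 1)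
    (hT' : ∀ s a s', 0 ≤ T' s a s') (hTsum' : ∀ s a, ∑ s' : S, T' s a s' = 1)
    -- `Qstarbar` is the (unique) fixed point of the Bellman operator of `M̄ = (T', R')`,
    -- so that `fun s => qmax (Qstarbar s)` is the optimal value function `V*_{M̄}`.
    (Qstarbar : S → A → ℝ)
    (hQstarbar : ∀ s a, Qstarbar s a = bellman γ T' R' Qstarbar s a)
    -- `d` is the (unique) fixed point of `L_{M‖M̄}`, i.e. the dissimilarity `d(M‖M̄)`.
    (d : S → A → ℝ)
    (hd : ∀ s a, d s a = Lop γ T R T' R' (fun s => qmax (Qstarbar s)) d s a)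
    -- the two functions `Q_M` and `Q_{M̄}` and their hypotheses
    (QM QMbar : S → A → ℝ)
    (hbound : ∀ s', |qmax (QMbar s')| ≤ qmax (Qstarbar s'))
    (hQQ : ∀ s a, |QM s a - QMbar s a| ≤ d s a) :
    ∀ s a, |bellman γ T R QM s a - bellman γ T' R' QMbar s a| ≤ d s a := by
  intro s a
  rw [hd s a]
  simp only [bellman, Lop, Dop]
  have hsum : |∑ s' : S, T s a s' * qmax (QM s') - ∑ s' : S, T' s a s' * qmax (QMbar s')|
      ≤ ∑ s' : S, qmax (Qstarbar s') * |T s a s' - T' s a s'|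
        + ∑ s' : S, T s a s' * qmax (d s') := by
    rw [← Finset.sum_sub_distrib, ← Finset.sum_add_distrib]
    refine (Finset.abs_sum_le_sum_abs _ _).trans (Finset.sum_le_sum fun s' _ => ?_)
    have e : T s a s' * qmax (QM s') - T' s a s' * qmax (QMbar s')
        = qmax (QMbar s') * (T s a s' - T' s a s')
          + T s a s' * (qmax (QM s') - qmax (QMbar s')) := by ring
    rw [e]
    refine (abs_add_le _ _).trans (add_le_add ?_ ?_)
    · rw [abs_mul]
      exact mul_le_mul_of_nonneg_right (hbound s') (abs_nonneg _)
    · rw [abs_mul, abs_of_nonneg (hT s a s')]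
      exact mul_le_mul_of_nonneg_left (qmax_sub_abs_le _ _ _ (hQQ s')) (hT s a s')
  have e : ∀ x y : ℝ, R s a + γ * x - (R' s a + γ * y) = (R s a - R' s a) + γ * (x - y) := by
    intro x y; ring
  rw [e]
  refine (abs_add_le _ _).trans ?_
  rw [abs_mul, abs_of_nonneg hγ0]
  have := mul_le_mul_of_nonneg_left hsum hγ0
  rw [mul_add] at this
  linarith
end

section
/- (Lemma 4.2, one-step Bellman bound.) Let M = (T,R) and M̄ = (T',R') be two finite discounted MDPs on (S, A, γ), and let Q_M, Q_{M̄} : S × A → ℝ be two functions such that (i) |max_{a'∈A} Q_{M̄}(s',a')| ≤ V*_{M̄}(s') and |max_{a'∈A} Q_M(s',a')| ≤ V*_M(s') for all s' ∈ S, and (ii) |Q_M(s,a) − Q_{M̄}(s,a)| ≤ Δ_{s,a}(M, M̄) for all (s,a) ∈ S × A. Then |(Γ_M Q_M)(s,a) − (Γ_{M̄} Q_{M̄})(s,a)| ≤ Δ_{s,a}(M, M̄) for all (s,a) ∈ S × A. -/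
open Finset

variable {S A : Type*}

theorem qmax_sub_le_aux [Fintype A] [Nonempty A] (f g d : A → ℝ)
    (h : ∀ a, |f a - g a| ≤ d a) : |qmax f - qmax g| ≤ qmax d := by
  have key : ∀ f g : A → ℝ, (∀ a, |f a - g a| ≤ d a) → qmax f ≤ qmax g + qmax d := by
    intro f g h
    unfold qmax
    refine Finset.sup'_le _ _ fun a _ => ?_
    have h1 := Finset.le_sup' g (Finset.mem_univ a)
    have h2 := Finset.le_sup' d (Finset.mem_univ a)
    have h3 := (abs_le.1 (h a)).2
    linarith
  have h1 := key f g h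
  have h2 := key g f fun a => by rw [abs_sub_comm]; exact h a
  rw [abs_le]
  constructor <;> linarith

theorem bellman_bound_aux [Fintype S] [Fintype A] [Nonempty A]
    (γ : ℝ) (hγ0 : 0 ≤ γ)
    (T : S → A → S → ℝ) (R : S → A → ℝ)
    (T' : S → A → S → ℝ) (R' : S → A → ℝ)
    (hT : ∀ s a s', 0 ≤ T s a s') (V : S → ℝ) (d f g : S → A → ℝ)
    (hg : ∀ s, |qmax (g s)| ≤ V s) (h : ∀ s a, |f s a - g s a| ≤ d s a) (s : S) (a : A) :
    |bellman γ T R f s a - bellman γ T' R' g s a| ≤ Lop γ T R T' R' V d s a := by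
  unfold bellman Lop Dop
  have e : R s a + γ * ∑ s' : S, T s a s' * qmax (f s')
      - (R' s a + γ * ∑ s' : S, T' s a s' * qmax (g s'))
      = (R s a - R' s a) + γ * ∑ s' : S, (qmax (g s') * (T s a s' - T' s a s')
        + T s a s' * (qmax (f s') - qmax (g s'))) := by
    have : ∑ s' : S, (qmax (g s') * (T s a s' - T' s a s')
        + T s a s' * (qmax (f s') - qmax (g s')))
        = ∑ s' : S, T s a s' * qmax (f s') - ∑ s' : S, T' s a s' * qmax (g s') := by
      rw [← Finset.sum_sub_distrib]
      exact Finset.sum_congr rfl fun _ _ => by ring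
    rw [this]; ring
  rw [e, add_assoc, ← mul_add, ← Finset.sum_add_distrib]
  refine (abs_add_le _ _).trans (add_le_add le_rfl ?_)
  rw [abs_mul, abs_of_nonneg hγ0]
  refine mul_le_mul_of_nonneg_left ?_ hγ0
  refine (Finset.abs_sum_le_sum_abs _ _).trans (Finset.sum_le_sum fun s' _ => ?_)
  refine (abs_add_le _ _).trans (add_le_add ?_ ?_)
  · rw [abs_mul]
    exact mul_le_mul_of_nonneg_right (hg s') (abs_nonneg _)
  · rw [abs_mul, abs_of_nonneg (hT s a s')]
    exact mul_le_mul_of_nonneg_left (qmax_sub_le_aux _ _ _ (h s')) (hT s a s')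

/-- Lemma 4.2 (one-step Bellman bound with the pseudo-metric `Δ`). -/
theorem one_step_bellman_bound
    [Fintype S] [Nonempty S] [Fintype A] [Nonempty A]
    (γ : ℝ) (hγ0 : 0 ≤ γ) (hγ1 : γ < 1)
    (T : S → A → S → ℝ) (R : S → A → ℝ)
    (T' : S → A → S → ℝ) (R' : S → A → ℝ)
    (hT : ∀ s a s', 0 ≤ T s a s') (hTsum : ∀ s a, ∑ s' : S, T s a s' = 1)
    (hT' : ∀ s a s', 0 ≤ T' s a s') (hTsum' : ∀ s a, ∑ s' : S, T' s a s' = 1)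
    -- `QstarM` and `Qstarbar` are the (unique) fixed points of the Bellman operators of
    -- `M = (T, R)` and `M̄ = (T', R')`, giving the optimal value functions `V*_M`, `V*_{M̄}`.
    (QstarM : S → A → ℝ) (hQstarM : ∀ s a, QstarM s a = bellman γ T R QstarM s a)
    (Qstarbar : S → A → ℝ)
    (hQstarbar : ∀ s a, Qstarbar s a = bellman γ T' R' Qstarbar s a)
    -- `d1 = d(M‖M̄)` and `d2 = d(M̄‖M)` are the (unique) fixed points of `L_{M‖M̄}` and
    -- `L_{M̄‖M}`; the pseudo-metric is `Δ_{s,a}(M,M̄) = min (d1 s a) (d2 s a)`.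
    (d1 : S → A → ℝ)
    (hd1 : ∀ s a, d1 s a = Lop γ T R T' R' (fun s => qmax (Qstarbar s)) d1 s a)
    (d2 : S → A → ℝ)
    (hd2 : ∀ s a, d2 s a = Lop γ T' R' T R (fun s => qmax (QstarM s)) d2 s a)
    -- the two functions `Q_M` and `Q_{M̄}` and their hypotheses
    (QM QMbar : S → A → ℝ)
    (hboundbar : ∀ s', |qmax (QMbar s')| ≤ qmax (Qstarbar s'))
    (hboundM : ∀ s', |qmax (QM s')| ≤ qmax (QstarM s'))
    (hQQ : ∀ s a, |QM s a - QMbar s a| ≤ min (d1 s a) (d2 s a)) :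
    ∀ s a, |bellman γ T R QM s a - bellman γ T' R' QMbar s a| ≤
      min (d1 s a) (d2 s a) := by
  intro s a
  refine le_min ?_ ?_
  · rw [hd1]
    exact bellman_bound_aux γ hγ0 T R T' R' hT _ d1 QM QMbar hboundbar
      (fun s a => (hQQ s a).trans (min_le_left _ _)) s a
  · rw [hd2, abs_sub_comm]
    exact bellman_bound_aux γ hγ0 T' R' T R hT' _ d2 QMbar QM hboundM
      (fun s a => by rw [abs_sub_comm]; exact (hQQ s a).trans (min_le_right _ _)) s a
end

section
/- (Lemma 4.3, local pseudo-Lipschitz continuity of the optimal Q-value.) Let M = (T,R) and M̄ = (T',R') be two finite discounted MDPs on (S, A, γ) whose rewards are both nonnegative (R s a ≥ 0 and R' s a ≥ 0 for all (s,a)). Then the unique fixed points of their Bellman operators satisfy |Q*_M(s,a) − Q*_{M̄}(s,a)| ≤ Δ_{s,a}(M, M̄) for all (s,a) ∈ S × A. -/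
open Finset

variable {S A : Type*}

theorem aux_max {S A : Type*} [Fintype S] [Nonempty S] [Fintype A] [Nonempty A]
    (γ : ℝ) (hγ1 : γ < 1) (g : S → A → ℝ)
    (h : ∀ K : ℝ, 0 ≤ K → (∀ s a, g s a ≤ K) → ∀ s a, g s a ≤ γ * K) :
    ∀ s a, g s a ≤ 0 := by
  obtain ⟨p, hp⟩ := Finite.exists_max (fun p : S × A => g p.1 p.2)
  have hle : ∀ s a, g s a ≤ g p.1 p.2 := fun s a => hp (s, a)
  have h0 : g p.1 p.2 ≤ 0 := by
    by_contra hc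
    push Not at hc
    have := h _ hc.le hle p.1 p.2
    nlinarith
  exact fun s a => (hle s a).trans h0

theorem le_qmax {A : Type*} [Fintype A] [Nonempty A] (f : A → ℝ) (a : A) : f a ≤ qmax f :=
  Finset.le_sup' f (Finset.mem_univ a)

theorem qmax_le {A : Type*} [Fintype A] [Nonempty A] (f : A → ℝ) (c : ℝ) (h : ∀ a, f a ≤ c) :
    qmax f ≤ c :=
  Finset.sup'_le _ f (fun a _ => h a)

theorem aux_nonneg {S A : Type*} [Fintype S] [Nonempty S] [Fintype A] [Nonempty A]
    (γ : ℝ) (hγ0 : 0 ≤ γ) (hγ1 : γ < 1) (T : S → A → S → ℝ) (R : S → A → ℝ)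
    (hT : ∀ s a s', 0 ≤ T s a s') (hTsum : ∀ s a, ∑ s' : S, T s a s' = 1)
    (hR : ∀ s a, 0 ≤ R s a)
    (Q : S → A → ℝ) (hQ : ∀ s a, Q s a = bellman γ T R Q s a) (s : S) :
    0 ≤ qmax (Q s) := by
  have key : ∀ s a, -Q s a ≤ 0 := by
    refine aux_max γ hγ1 (fun s a => -Q s a) ?_
    intro K _ hb s a
    have h1 : ∑ s' : S, T s a s' * (-K) ≤ ∑ s' : S, T s a s' * qmax (Q s') := by
      refine Finset.sum_le_sum fun s' _ => mul_le_mul_of_nonneg_left ?_ (hT s a s')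
      have a0 : A := Classical.arbitrary A
      have h2 := le_qmax (Q s') a0
      have h3 := hb s' a0
      linarith
    rw [← Finset.sum_mul, hTsum, one_mul] at h1
    have h4 := mul_le_mul_of_nonneg_left h1 hγ0
    have h5 := hR s a
    have h6 := hQ s a
    simp only [bellman] at h6
    linarith
  have a0 : A := Classical.arbitrary A
  have h2 := le_qmax (Q s) a0
  have h3 := key s a0
  linarith

theorem aux_main {S A : Type*} [Fintype S] [Nonempty S] [Fintype A] [Nonempty A]
    (γ : ℝ) (hγ0 : 0 ≤ γ) (hγ1 : γ < 1)
    (T : S → A → S → ℝ) (R : S → A → ℝ)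
    (T' : S → A → S → ℝ) (R' : S → A → ℝ)
    (hT : ∀ s a s', 0 ≤ T s a s') (hTsum : ∀ s a, ∑ s' : S, T s a s' = 1)
    (hT' : ∀ s a s', 0 ≤ T' s a s') (hTsum' : ∀ s a, ∑ s' : S, T' s a s' = 1)
    (hR' : ∀ s a, 0 ≤ R' s a)
    (Q : S → A → ℝ) (hQ : ∀ s a, Q s a = bellman γ T R Q s a)
    (Q' : S → A → ℝ) (hQ' : ∀ s a, Q' s a = bellman γ T' R' Q' s a)
    (d : S → A → ℝ)
    (hd : ∀ s a, d s a = Lop γ T R T' R' (fun s => qmax (Q' s)) d s a) (s : S) (a : A) :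
    |Q s a - Q' s a| ≤ d s a := by
  have hV := aux_nonneg γ hγ0 hγ1 T' R' hT' hTsum' hR' Q' hQ'
  suffices h : ∀ s a, |Q s a - Q' s a| - d s a ≤ 0 by linarith [h s a]
  refine aux_max γ hγ1 (fun s a => |Q s a - Q' s a| - d s a) ?_
  intro K _ hb s a
  have hq : ∀ s', |qmax (Q s') - qmax (Q' s')| ≤ qmax (d s') + K := by
    intro s'
    rw [abs_sub_le_iff]
    constructor
    · rw [sub_le_iff_le_add]
      refine qmax_le _ _ fun b => ?_
      have h1 := hb s' b
      have h2 := le_qmax (d s') b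
      have h3 := le_qmax (Q' s') b
      have h4 := le_abs_self (Q s' b - Q' s' b)
      linarith
    · rw [sub_le_iff_le_add]
      refine qmax_le _ _ fun b => ?_
      have h1 := hb s' b
      have h2 := le_qmax (d s') b
      have h3 := le_qmax (Q s') b
      have h4 := neg_abs_le (Q s' b - Q' s' b)
      linarith
  have hsum : |∑ s', (T s a s' * qmax (Q s') - T' s a s' * qmax (Q' s'))| ≤
      ∑ s', (T s a s' * qmax (d s') + T s a s' * K + qmax (Q' s') * |T s a s' - T' s a s'|) := by
    refine (Finset.abs_sum_le_sum_abs _ _).trans (Finset.sum_le_sum fun s' _ => ?_)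
    have e : T s a s' * qmax (Q s') - T' s a s' * qmax (Q' s') =
      T s a s' * (qmax (Q s') - qmax (Q' s')) + qmax (Q' s') * (T s a s' - T' s a s') := by ring
    rw [e]
    refine (abs_add_le _ _).trans ?_
    rw [abs_mul, abs_mul, abs_of_nonneg (hT s a s'), abs_of_nonneg (hV s')]
    have := mul_le_mul_of_nonneg_left (hq s') (hT s a s')
    linarith
  rw [Finset.sum_add_distrib, Finset.sum_add_distrib, ← Finset.sum_mul, hTsum, one_mul,
    Finset.sum_sub_distrib] at hsum
  have h1 := hQ s a
  have h2 := hQ' s a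
  have h3 := hd s a
  simp only [bellman, Lop, Dop] at h1 h2 h3
  have e : Q s a - Q' s a = (R s a - R' s a) +
      γ * (∑ s', T s a s' * qmax (Q s') - ∑ s', T' s a s' * qmax (Q' s')) := by
    rw [h1, h2]; ring
  have h4 := abs_add_le (R s a - R' s a)
    (γ * (∑ s', T s a s' * qmax (Q s') - ∑ s', T' s a s' * qmax (Q' s')))
  rw [← e, abs_mul, abs_of_nonneg hγ0] at h4
  have h5 := mul_le_mul_of_nonneg_left hsum hγ0
  linarith

/-- Lemma 4.3: local pseudo-Lipschitz continuity of the optimal Q-value. -/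
theorem optimal_Q_pseudo_lipschitz
    [Fintype S] [Nonempty S] [Fintype A] [Nonempty A]
    (γ : ℝ) (hγ0 : 0 ≤ γ) (hγ1 : γ < 1)
    (T : S → A → S → ℝ) (R : S → A → ℝ)
    (T' : S → A → S → ℝ) (R' : S → A → ℝ)
    (hT : ∀ s a s', 0 ≤ T s a s') (hTsum : ∀ s a, ∑ s' : S, T s a s' = 1)
    (hT' : ∀ s a s', 0 ≤ T' s a s') (hTsum' : ∀ s a, ∑ s' : S, T' s a s' = 1)
    (hR : ∀ s a, 0 ≤ R s a) (hR' : ∀ s a, 0 ≤ R' s a)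
    -- `QstarM` and `Qstarbar` are the (unique) fixed points of the Bellman operators of
    -- `M = (T, R)` and `M̄ = (T', R')`.
    (QstarM : S → A → ℝ) (hQstarM : ∀ s a, QstarM s a = bellman γ T R QstarM s a)
    (Qstarbar : S → A → ℝ)
    (hQstarbar : ∀ s a, Qstarbar s a = bellman γ T' R' Qstarbar s a)
    -- `d1 = d(M‖M̄)` and `d2 = d(M̄‖M)` are the (unique) fixed points of `L_{M‖M̄}` and
    -- `L_{M̄‖M}`; the pseudo-metric is `Δ_{s,a}(M,M̄) = min (d1 s a) (d2 s a)`.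
    (d1 : S → A → ℝ)
    (hd1 : ∀ s a, d1 s a = Lop γ T R T' R' (fun s => qmax (Qstarbar s)) d1 s a)
    (d2 : S → A → ℝ)
    (hd2 : ∀ s a, d2 s a = Lop γ T' R' T R (fun s => qmax (QstarM s)) d2 s a) :
    ∀ s a, |QstarM s a - Qstarbar s a| ≤ min (d1 s a) (d2 s a) := by
  intro s a
  refine le_min ?_ ?_
  · exact aux_main γ hγ0 hγ1 T R T' R' hT hTsum hT' hTsum' hR' QstarM hQstarM Qstarbar hQstarbar
      d1 hd1 s a
  · rw [abs_sub_comm]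
    exact aux_main γ hγ0 hγ1 T' R' T R hT' hTsum' hT hTsum hR Qstarbar hQstarbar QstarM hQstarM
      d2 hd2 s a
end
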